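/- Let $p$ and $q$ be distinct odd primes, let $E$ be the $pq$-th cyclotomic field, and let $i, j$ be integers with $0 \le i \le p-3$ and $1 \le j \le q-1$. Then, in the quotient group $E^{\times}/(E^{\times})^p$: (1) the class of $\eta_{i,j}$ lies in the subgroup generated by the classes of $\eta'_{0,j}, \eta'_{1,j}, \ldots, \eta'_{i,j}$; and (2) the class of $\eta'_{i,j}$ lies in the subgroup generated by the classes of $\eta_{0,j}, \eta_{1,j}, \ldots, \eta_{i,j}$. -/

import Mathlib

/-!
Write `u s = 1 - ζ_q^j ζ_p^s`; these are nonzero elements of `E`, because `ζ_q^j` is not a `p`-th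
root of unity. Modulo `p`-th powers, a product `∏ u s ^ f s` depends only on `f` modulo `p` and is
multiplicative in `f` (`prod_pow_eq_of_modEq`). It therefore suffices to compare the functions
`s ↦ C(s, i)` and `s ↦ s ^ i`, with coefficients in `ℤ`, modulo `p`:

* `s ^ i` is an integral combination of `C(s, 0), …, C(s, i)` (`exists_pow_eq_sum_choose`);
* `i! C(s, i)` is the falling factorial, a polynomial in `s` of degree `i` with integral
  coefficients, and `i!` is invertible modulo `p` since `i < p` (`exists_choose_modEq_sum_pow`).
-/

/-- `ζ_m = e^{2πi/m}`. -/
noncomputable def primRoot (m : ℕ) : ℂ := Complex.exp (2 * (Real.pi : ℂ) * Complex.I / (m : ℂ))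

/-- The `pq`-th cyclotomic field `E = ℚ(ζ_p, ζ_q)` as a subfield of `ℂ`. -/
noncomputable def cycField (p q : ℕ) : IntermediateField ℚ ℂ :=
  IntermediateField.adjoin ℚ ({primRoot p, primRoot q} : Set ℂ)

/-- `η_{i,j} = ∏_{s=0}^{p-1} (1 - ζ_q^j ζ_p^s)^{C(s,i)}`. -/
noncomputable def etaElt (p q i j : ℕ) : ℂ :=
  ∏ s ∈ Finset.range p, (1 - primRoot q ^ j * primRoot p ^ s) ^ (Nat.choose s i)

/-- `η'_{i,j} = ∏_{s=0}^{p-1} (1 - ζ_q^j ζ_p^s)^{s^i}` (with `0^0 = 1`). -/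
noncomputable def etaElt' (p q i j : ℕ) : ℂ :=
  ∏ s ∈ Finset.range p, (1 - primRoot q ^ j * primRoot p ^ s) ^ (s ^ i)

open Finset

theorem primRoot_isPrimitiveRoot {m : ℕ} (hm : m ≠ 0) : IsPrimitiveRoot (primRoot m) m :=
  Complex.isPrimitiveRoot_exp m hm

theorem unit_ne_zero {p q j : ℕ} (hp : p.Prime) (hq : q.Prime) (hpq : p ≠ q)
    (hj1 : 1 ≤ j) (hj : j ≤ q - 1) (s : ℕ) :
    1 - primRoot q ^ j * primRoot p ^ s ≠ 0 := by
  intro h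
  have h1 : primRoot q ^ j * primRoot p ^ s = 1 := (sub_eq_zero.mp h).symm
  have h2 : primRoot q ^ (j * p) = 1 := by
    have h3 := congrArg (· ^ p) h1
    simp only [mul_pow, one_pow, ← pow_mul] at h3
    rwa [mul_comm s p, pow_mul (primRoot p) p s,
      (primRoot_isPrimitiveRoot hp.ne_zero).pow_eq_one, one_pow, mul_one] at h3
  have h4 : q ∣ j * p := (primRoot_isPrimitiveRoot hq.ne_zero).dvd_of_pow_eq_one _ h2
  rcases hq.dvd_mul.mp h4 with h5 | h5
  · have := Nat.le_of_dvd (by omega) h5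
    have := hq.pos
    omega
  · exact hpq ((Nat.prime_dvd_prime_iff_eq hq hp).mp h5).symm

theorem unit_mem (p q j s : ℕ) : 1 - primRoot q ^ j * primRoot p ^ s ∈ cycField p q := by
  have h1 : primRoot p ∈ cycField p q := IntermediateField.subset_adjoin _ _ (by simp)
  have h2 : primRoot q ∈ cycField p q := IntermediateField.subset_adjoin _ _ (by simp)
  exact sub_mem (one_mem _) (mul_mem (pow_mem h2 _) (pow_mem h1 _))

/-- A congruence modulo `p` between exponent functions yields a relation modulo `p`-th powers
between the corresponding products. -/
theorem prod_pow_eq_of_modEq {F : IntermediateField ℚ ℂ} {p i : ℕ} {u : ℕ → ℂ}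
    (hu : ∀ s, u s ∈ F) (hu0 : ∀ s, u s ≠ 0) (f : ℕ → ℕ) (g : ℕ → ℕ → ℕ) (m : ℕ → ℤ)
    (h : ∀ s, (p : ℤ) ∣ (f s : ℤ) - ∑ k ∈ range (i + 1), m k * (g k s : ℤ)) :
    ∃ w : ℂ, w ∈ F ∧ w ≠ 0 ∧
      ∏ s ∈ range p, u s ^ f s =
        (∏ k ∈ range (i + 1), (∏ s ∈ range p, u s ^ g k s) ^ m k) * w ^ p := by
  choose c hc using h
  refine ⟨∏ s ∈ range p, u s ^ c s, prod_mem fun s _ => zpow_mem (hu s) _,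
    Finset.prod_ne_zero_iff.mpr fun s _ => zpow_ne_zero _ (hu0 s), ?_⟩
  simp only [← Finset.prod_zpow]
  rw [Finset.prod_comm, ← Finset.prod_pow, ← Finset.prod_mul_distrib]
  refine Finset.prod_congr rfl fun s _ => ?_
  have hsum : ∏ k ∈ range (i + 1), (u s ^ g k s) ^ m k =
      u s ^ (∑ k ∈ range (i + 1), m k * (g k s : ℤ)) := by
    generalize range (i + 1) = t
    induction t using Finset.induction_on with
    | empty => simp
    | insert a t ha ih =>
      rw [Finset.prod_insert ha, Finset.sum_insert ha, zpow_add₀ (hu0 s), ih, ← zpow_natCast,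
        ← zpow_mul, mul_comm (m a)]
  rw [hsum, ← zpow_natCast (u s ^ c s), ← zpow_mul, ← zpow_add₀ (hu0 s), ← zpow_natCast]
  congr 1
  linear_combination hc s

/-- The recursion on the coefficients comes from
`s * C(s, k) = k * C(s, k) + (k + 1) * C(s, k + 1)`. -/
theorem exists_pow_eq_sum_choose (i : ℕ) :
    ∃ m : ℕ → ℤ, ∀ s : ℕ, (s : ℤ) ^ i = ∑ k ∈ range (i + 1), m k * (s.choose k : ℤ) := by
  induction i with
  | zero => exact ⟨fun _ => 1, by simp⟩
  | succ i ih =>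
    obtain ⟨m, hm⟩ := ih
    refine ⟨fun k => (if k ≤ i then k * m k else 0) + k * m (k - 1), fun s => ?_⟩
    have key : ∀ k : ℕ, (s : ℤ) * (s.choose k : ℤ) =
        k * (s.choose k : ℤ) + (k + 1) * (s.choose (k + 1) : ℤ) := by
      intro k
      rcases le_or_gt k s with hks | hks
      · have := Nat.choose_succ_right_eq s k
        zify [hks] at this
        linear_combination -this
      · simp [Nat.choose_eq_zero_of_lt hks, Nat.choose_eq_zero_of_lt (Nat.lt_succ_of_lt hks)]
    simp only [add_mul, Finset.sum_add_distrib]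
    rw [Finset.sum_range_succ, Finset.sum_range_succ' (fun k : ℕ => (k : ℤ) * m (k - 1) * _),
      pow_succ, hm s, Finset.sum_mul]
    simp only [Nat.cast_zero, zero_mul, add_zero, Nat.add_sub_cancel, Nat.cast_add, Nat.cast_one,
      show ¬ (i + 1 ≤ i) by omega, if_false]
    rw [← Finset.sum_add_distrib]
    refine Finset.sum_congr rfl fun k hk => ?_
    rw [if_pos (by simpa [Nat.lt_succ_iff] using hk)]
    linear_combination m k * key k

theorem exists_choose_modEq_sum_pow {p i : ℕ} (hp : p.Prime) (hi : i < p) :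
    ∃ m : ℕ → ℤ, ∀ s : ℕ,
      (p : ℤ) ∣ (s.choose i : ℤ) - ∑ k ∈ range (i + 1), m k * (s : ℤ) ^ k := by
  have hcop : IsCoprime (i.factorial : ℤ) (p : ℤ) :=
    Nat.isCoprime_iff_coprime.mpr
      (((Nat.Prime.coprime_iff_not_dvd hp).mpr fun h => by
        have := (hp.dvd_factorial).mp h
        omega).symm)
  -- `a` inverts `i!` modulo `p`.
  obtain ⟨a, b, hab⟩ := hcop
  refine ⟨fun k => a * (descPochhammer ℤ i).coeff k, fun s => ?_⟩
  have h1 : ∑ k ∈ range (i + 1), (descPochhammer ℤ i).coeff k * (s : ℤ) ^ k =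
      i.factorial * (s.choose i : ℤ) := by
    rw [← Nat.cast_mul, ← Nat.descFactorial_eq_factorial_mul_choose,
      ← descPochhammer_eval_eq_descFactorial ℤ s i, Polynomial.eval_eq_sum_range,
      descPochhammer_natDegree]
  refine ⟨b * s.choose i, ?_⟩
  simp only [mul_assoc, ← Finset.mul_sum]
  rw [h1]
  linear_combination -(s.choose i : ℤ) * hab

/-- For distinct odd primes `p, q`, `0 ≤ i ≤ p-3`, `1 ≤ j ≤ q-1`,
in `E^×/(E^×)^p`: the class of `η_{i,j}` lies in the subgroup generated by the
classes of `η'_{0,j}, …, η'_{i,j}`, and the class of `η'_{i,j}` lies in the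
subgroup generated by the classes of `η_{0,j}, …, η_{i,j}`. -/
theorem eta_and_eta'_generate_same (p q : ℕ) (hp : p.Prime) (hq : q.Prime)
    (hpo : Odd p) (hqo : Odd q) (hpq : p ≠ q)
    (i j : ℕ) (hi : i ≤ p - 3) (hj1 : 1 ≤ j) (hj : j ≤ q - 1) :
    (∃ (m : ℕ → ℤ) (w : ℂ), w ∈ cycField p q ∧ w ≠ 0 ∧
      etaElt p q i j = (∏ k ∈ Finset.range (i + 1), etaElt' p q k j ^ m k) * w ^ p) ∧
    (∃ (m : ℕ → ℤ) (w : ℂ), w ∈ cycField p q ∧ w ≠ 0 ∧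
      etaElt' p q i j = (∏ k ∈ Finset.range (i + 1), etaElt p q k j ^ m k) * w ^ p) := by
  have hu := unit_mem p q j
  have hu0 := unit_ne_zero hp hq hpq hj1 hj
  have hip : i < p := by
    have := hp.pos
    omega
  constructor
  · obtain ⟨m, hm⟩ := exists_choose_modEq_sum_pow hp hip
    exact ⟨m, prod_pow_eq_of_modEq hu hu0 (fun s => s.choose i) (fun k s => s ^ k) m
      (by simpa using hm)⟩
  · obtain ⟨m, hm⟩ := exists_pow_eq_sum_choose i
    exact ⟨m, prod_pow_eq_of_modEq hu hu0 (fun s => s ^ i) (fun k s => s.choose k) m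
      (fun s => by simp [hm s])⟩
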